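/- arXiv:1808.10312 — 2 statements merged into one kernel-verified Lean document; each statement's English description precedes it below -/
import Mathlib

section
/- Soundness and completeness of the Logic of Approximate Entailment on a Chain: for any theory T and any formula Φ of LAEC, T proves Φ in the proof system of LAEC if and only if T semantically entails Φ, i.e. every evaluation in every totally ordered similarity space that satisfies all members of T also satisfies Φ. -/
/-- A finite t-norm: a finite subset `V` of the real unit interval containing `0` and `1`,
equipped with an associative, commutative, monotone operation with neutral element `1`. -/
structure FiniteTNorm where
  V : Set ℝ
  finite : V.Finite
  subset : V ⊆ Set.Icc (0 : ℝ) 1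
  zero_mem : (0 : ℝ) ∈ V
  one_mem : (1 : ℝ) ∈ V
  op : V → V → V
  op_assoc : ∀ a b c, op (op a b) c = op a (op b c)
  op_comm : ∀ a b, op a b = op b a
  op_one : ∀ a, op a ⟨1, one_mem⟩ = a
  op_mono : ∀ a b c d : V, (a : ℝ) ≤ (b : ℝ) → (c : ℝ) ≤ (d : ℝ) → (op a c : ℝ) ≤ (op b d : ℝ)

def FiniteTNorm.one (T : FiniteTNorm) : T.V := ⟨1, T.one_mem⟩

def FiniteTNorm.zero (T : FiniteTNorm) : T.V := ⟨0, T.zero_mem⟩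

/-- A finite similarity space based on the finite t-norm `T`. -/
structure SimilaritySpace (T : FiniteTNorm) (W : Type) [Fintype W] [Nonempty W] where
  S : W → W → T.V
  eq_one_iff : ∀ u v, S u v = T.one ↔ u = v
  symm : ∀ u v, S u v = S v u
  triangle : ∀ u v w, (T.op (S u v) (S v w) : ℝ) ≤ (S u w : ℝ)

/-- The `c`-neighbourhood `U_c(A)` of a set `A` of worlds. -/
def SimilaritySpace.nbhd {T : FiniteTNorm} {W : Type} [Fintype W] [Nonempty W]
    (sp : SimilaritySpace T W) (c : T.V) (A : Set W) : Set W :=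
  {w | ∃ a ∈ A, (c : ℝ) ≤ (sp.S w a : ℝ)}

/-- A totally ordered similarity space: a finite similarity space together with a total
order compatible with the similarity. -/
structure TOSimilaritySpace (T : FiniteTNorm) (W : Type) [Fintype W] [Nonempty W]
    [LinearOrder W] extends SimilaritySpace T W where
  compat : ∀ u v w : W, u ≤ v → v ≤ w → (S u w : ℝ) ≤ min (S u v : ℝ) (S v w : ℝ)

/-- The downward closure `◇≤ A`. -/
def dcl {W : Type} [LinearOrder W] (A : Set W) : Set W := {v | ∃ w ∈ A, v ≤ w}

/-- The upward closure `◇≥ A`. -/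
def ucl {W : Type} [LinearOrder W] (A : Set W) : Set W := {v | ∃ w ∈ A, w ≤ v}

/-! ## Syntax of the Logic of Approximate Entailment on a Chain `LAEC` -/

/-- Basic expressions of `LAEC` over `N` propositional variables: Boolean operations and
the two modal operators `◇≤` (`dle`) and `◇≥` (`dge`). -/
inductive BExpC (N : ℕ) : Type
  | var (i : Fin N)
  | bot
  | top
  | and (φ ψ : BExpC N)
  | or (φ ψ : BExpC N)
  | not (φ : BExpC N)
  | dle (φ : BExpC N)
  | dge (φ : BExpC N)

/-- Formulas of classical propositional logic over countably many variables. -/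
inductive PropForm : Type
  | var (n : ℕ)
  | bot
  | top
  | and (φ ψ : PropForm)
  | or (φ ψ : PropForm)
  | not (φ : PropForm)

/-- Boolean evaluation of a classical propositional formula. -/
def PropForm.beval (v : ℕ → Bool) : PropForm → Bool
  | .var n => v n
  | .bot => false
  | .top => true
  | .and φ ψ => φ.beval v && ψ.beval v
  | .or φ ψ => φ.beval v || ψ.beval v
  | .not φ => !φ.beval v

/-- Uniform replacement of the variables of a classical propositional formula by basic
expressions of `LAEC`. -/
def PropForm.substC {N : ℕ} (σ : ℕ → BExpC N) : PropForm → BExpC N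
  | .var n => σ n
  | .bot => .bot
  | .top => .top
  | .and φ ψ => .and (φ.substC σ) (ψ.substC σ)
  | .or φ ψ => .or (φ.substC σ) (ψ.substC σ)
  | .not φ => .not (φ.substC σ)

/-- The literal on variable `i`, positive or negated according to `b`. -/
def BExpC.literal {N : ℕ} (i : Fin N) (b : Bool) : BExpC N :=
  if b then BExpC.var i else BExpC.not (BExpC.var i)

/-- The conjunction of a list of basic expressions. -/
def conjListC {N : ℕ} : List (BExpC N) → BExpC N
  | [] => BExpC.top
  | [φ] => φ
  | φ :: χ :: rest => BExpC.and φ (conjListC (χ :: rest))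

/-- A maximally elementary conjunction (m.e.c.): a conjunction of literals in which each
variable occurs exactly once. -/
def IsMecC {N : ℕ} (φ : BExpC N) : Prop :=
  ∃ (l : List (Fin N)) (f : Fin N → Bool),
    l.Nodup ∧ (∀ i, i ∈ l) ∧ φ = conjListC (l.map fun i => BExpC.literal i (f i))

/-- A diamond expression: a basic expression of the form `◇≤φ` or `◇≥φ`. -/
def IsDiamond {N : ℕ} : BExpC N → Prop
  | .dle _ => True
  | .dge _ => True
  | _ => False

/-- A conjunction of diamond expressions. -/
def IsDiamondConj {N : ℕ} (ρ : BExpC N) : Prop :=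
  ∃ l : List (BExpC N), l ≠ [] ∧ (∀ χ ∈ l, IsDiamond χ) ∧ ρ = conjListC l

/-- Formulas: Boolean combinations of graded implications `φ ⤳_c ψ`. -/
inductive CFml (N : ℕ) (V : Type) : Type
  | gi (φ : BExpC N) (c : V) (ψ : BExpC N)
  | and (Φ Ψ : CFml N V)
  | or (Φ Ψ : CFml N V)
  | not (Φ : CFml N V)

/-- The (definable) outer-level implication `Φ → Ψ := ¬Φ ∨ Ψ`. -/
def CFml.imp {N : ℕ} {V : Type} (Φ Ψ : CFml N V) : CFml N V := CFml.or (CFml.not Φ) Ψ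

/-- Boolean evaluation of a formula given truth values for the graded implications
occurring in it; a formula is a substitution instance of a classical tautology by graded
implications iff it evaluates to `true` under every such assignment. -/
def CFml.peval {N : ℕ} {V : Type} (g : BExpC N → V → BExpC N → Bool) : CFml N V → Bool
  | .gi φ c ψ => g φ c ψ
  | .and Φ Ψ => Φ.peval g && Ψ.peval g
  | .or Φ Ψ => Φ.peval g || Ψ.peval g
  | .not Φ => !Φ.peval g

/-! ## The proof system of `LAEC` -/

/-- Provability in `LAEC` from a theory `Th`: axioms (A1'), (A2)–(A11), (A12)–(A19) and
modus ponens. -/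
inductive LAECProv {N : ℕ} (T : FiniteTNorm) (Th : Set (CFml N T.V)) : CFml N T.V → Prop
  | hyp {Φ} (h : Φ ∈ Th) : LAECProv T Th Φ
  | mp {Φ Ψ} (h₁ : LAECProv T Th Φ) (h₂ : LAECProv T Th (Φ.imp Ψ)) : LAECProv T Th Ψ
  | a1' {φ ψ : BExpC N}
      (h : ∃ (φ' ψ' : PropForm) (σ : ℕ → BExpC N),
        (∀ v, φ'.beval v = true → ψ'.beval v = true) ∧
          φ = φ'.substC σ ∧ ψ = ψ'.substC σ) :
      LAECProv T Th (.gi φ T.one ψ)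
  | a2 (φ ψ : BExpC N) :
      LAECProv T Th ((CFml.gi φ T.one ψ).imp (.gi (φ.and ψ.not) T.one .bot))
  | a3 (φ ψ : BExpC N) {c d : T.V} (h : (d : ℝ) ≤ (c : ℝ)) :
      LAECProv T Th ((CFml.gi φ c ψ).imp (.gi φ d ψ))
  | a4 (φ ψ : BExpC N) :
      LAECProv T Th ((CFml.not (.gi ψ T.one .bot)).imp (.gi φ T.zero ψ))
  | a5 (φ : BExpC N) (c : T.V) :
      LAECProv T Th ((CFml.gi φ c .bot).imp (.gi φ T.one .bot))
  | a6 {δ ε : BExpC N} (c : T.V) (hδ : IsMecC δ) (hε : IsMecC ε) :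
      LAECProv T Th
        ((CFml.and (.not (.gi δ T.one .bot)) (.gi δ c ε)).imp (.gi ε c δ))
  | a7 (φ ψ χ : BExpC N) (c : T.V) :
      LAECProv T Th ((CFml.and (.gi φ c χ) (.gi ψ c χ)).imp (.gi (φ.or ψ) c χ))
  | a8 {ε : BExpC N} (φ ψ : BExpC N) (c : T.V) (hε : IsMecC ε) :
      LAECProv T Th ((CFml.gi ε c (φ.or ψ)).imp (.or (.gi ε c φ) (.gi ε c ψ)))
  | a9 (φ ψ χ : BExpC N) (c d : T.V) :
      LAECProv T Th ((CFml.and (.gi φ c ψ) (.gi ψ d χ)).imp (.gi φ (T.op c d) χ))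
  | a10 : LAECProv T Th (CFml.not (.gi .top T.one .bot))
  | a11 {Φ : CFml N T.V} (h : ∀ g : BExpC N → T.V → BExpC N → Bool, Φ.peval g = true) :
      LAECProv T Th Φ
  | a12a (φ : BExpC N) : LAECProv T Th (.gi φ T.one φ.dle)
  | a12b (φ : BExpC N) : LAECProv T Th (.gi φ T.one φ.dge)
  | a13a (φ : BExpC N) : LAECProv T Th (.gi φ.dle.dle T.one φ.dle)
  | a13b (φ : BExpC N) : LAECProv T Th (.gi φ.dge.dge T.one φ.dge)
  | a14a : LAECProv T Th (.gi (BExpC.bot.dle) T.one .bot)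
  | a14b : LAECProv T Th (.gi (BExpC.bot.dge) T.one .bot)
  | a15a (φ ψ : BExpC N) :
      LAECProv T Th (.or (.gi φ.dle T.one ψ.dle) (.gi ψ.dle T.one φ.dle))
  | a15b (φ ψ : BExpC N) :
      LAECProv T Th (.or (.gi φ.dge T.one ψ.dge) (.gi ψ.dge T.one φ.dge))
  | a16 {ε : BExpC N} (hε : IsMecC ε) :
      LAECProv T Th (.gi (ε.dle.and ε.dge) T.one ε)
  | a17a (φ ψ : BExpC N) (c : T.V) :
      LAECProv T Th ((CFml.gi φ c ψ).imp (.gi φ.dle c ψ.dle))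
  | a17b (φ ψ : BExpC N) (c : T.V) :
      LAECProv T Th ((CFml.gi φ c ψ).imp (.gi φ.dge c ψ.dge))
  | a18a (φ ψ : BExpC N) :
      LAECProv T Th
        ((CFml.gi (φ.and ψ.dle) T.one .bot).imp (.gi (φ.dge.and ψ.dle) T.one .bot))
  | a18b (φ ψ : BExpC N) :
      LAECProv T Th
        ((CFml.gi (φ.and ψ.dge) T.one .bot).imp (.gi (φ.dle.and ψ.dge) T.one .bot))
  | a19 {ρ σ : BExpC N} (φ : BExpC N) (c : T.V)
      (hρ : IsDiamondConj ρ) (hσ : IsDiamondConj σ) :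
      LAECProv T Th
        ((CFml.and (.and (.not (.gi (ρ.and σ) T.one .bot)) (.gi φ c ρ)) (.gi φ c σ)).imp
          (.gi φ c (ρ.and σ)))

/-! ## Semantics of `LAEC` -/

/-- An evaluation of the basic expressions of `LAEC` in a totally ordered similarity
space: it commutes with the Boolean operations, interprets `◇≤` and `◇≥` by the downward
and upward closures, and separates any two distinct worlds by some variable. -/
structure LAECEval (N : ℕ) (W : Type) [Fintype W] [Nonempty W] [LinearOrder W] where
  e : BExpC N → Set W
  map_bot : e .bot = ∅
  map_top : e .top = Set.univ
  map_and : ∀ φ ψ, e (φ.and ψ) = e φ ∩ e ψ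
  map_or : ∀ φ ψ, e (φ.or ψ) = e φ ∪ e ψ
  map_not : ∀ φ, e φ.not = (e φ)ᶜ
  map_dle : ∀ φ, e φ.dle = dcl (e φ)
  map_dge : ∀ φ, e φ.dge = ucl (e φ)
  separating : ∀ v w : W, v ≠ w → ∃ i : Fin N, Xor' (v ∈ e (.var i)) (w ∈ e (.var i))

/-- Satisfaction of a formula of `LAEC` by an evaluation in a totally ordered similarity
space. -/
def LAECSat {T : FiniteTNorm} {N : ℕ} {W : Type} [Fintype W] [Nonempty W] [LinearOrder W]
    (sp : TOSimilaritySpace T W) (ev : LAECEval N W) : CFml N T.V → Prop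
  | .gi φ c ψ => ev.e φ ⊆ sp.toSimilaritySpace.nbhd c (ev.e ψ)
  | .and Φ Ψ => LAECSat sp ev Φ ∧ LAECSat sp ev Ψ
  | .or Φ Ψ => LAECSat sp ev Φ ∨ LAECSat sp ev Ψ
  | .not Φ => ¬ LAECSat sp ev Φ

/-- Semantic entailment in `LAEC`: every evaluation in every totally ordered similarity
space that satisfies all members of the theory also satisfies the formula. -/
def LAECEntails {N : ℕ} (T : FiniteTNorm) (Th : Set (CFml N T.V)) (Φ : CFml N T.V) :
    Prop :=
  ∀ (W : Type) [Fintype W] [Nonempty W] [LinearOrder W],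
    ∀ (sp : TOSimilaritySpace T W) (ev : LAECEval N W),
      (∀ Ψ ∈ Th, LAECSat sp ev Ψ) → LAECSat sp ev Φ

/-!
Soundness of (A19) is Helly's theorem on a chain: conjunctions of diamond expressions and balls
around a point are interpreted by intervals, and three pairwise intersecting intervals have a
common point.

For completeness, extend a theory that does not prove `Φ` to a maximal one `M`; then
`M ⊢ φ ⤳_c ψ` behaves like a truth value. The worlds are the m.e.c.s consistent with `M`, ordered
by `u ≤ v` iff `M ⊢ u ⤳_1 ◇≤v`, and the similarity of `u` and `v` is the greatest `c` with
`M ⊢ u ⤳_c v`. Axiom (A8) makes a world imply, in each grade, one disjunct of any disjunction,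
so that provability in `M` is determined by the worlds; (A16) and (A19) give
`u ⤳_c ◇≤v ∧ u ⤳_c ◇≥v ⟹ u ⤳_c v`, whence antisymmetry of the order and its compatibility with
the similarity; and (A18) provides the witnesses for the diamonds.
-/

/-! ### The grades of a finite t-norm -/

namespace FiniteTNorm

variable {T : FiniteTNorm}

theorem le_one (c : T.V) : (c : ℝ) ≤ T.one := (T.subset c.2).2

theorem zero_le (c : T.V) : (T.zero : ℝ) ≤ c := (T.subset c.2).1

theorem one_op (c : T.V) : T.op T.one c = c := (T.op_comm _ _).trans (T.op_one c)

end FiniteTNorm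

/-! ### Neighbourhoods and closures -/

theorem nonempty_inter_inter_of_ordConnected {α : Type*} [LinearOrder α] {A B C : Set α}
    (hA : A.OrdConnected) (hB : B.OrdConnected) (hC : C.OrdConnected)
    (hAB : (A ∩ B).Nonempty) (hBC : (B ∩ C).Nonempty) (hAC : (A ∩ C).Nonempty) :
    (A ∩ B ∩ C).Nonempty := by
  obtain ⟨p, hpA, hpB⟩ := hAB
  obtain ⟨q, hqB, hqC⟩ := hBC
  obtain ⟨r, hrA, hrC⟩ := hAC
  have median : p ∈ Set.uIcc q r ∨ q ∈ Set.uIcc p r ∨ r ∈ Set.uIcc p q := by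
    simp only [Set.mem_uIcc]
    grind
  rcases median with hp | hq | hr
  · exact ⟨p, ⟨hpA, hpB⟩, hC.uIcc_subset hqC hrC hp⟩
  · exact ⟨q, ⟨hA.uIcc_subset hpA hrA hq, hqB⟩, hqC⟩
  · exact ⟨r, ⟨hrA, hB.uIcc_subset hpB hqB hr⟩, hrC⟩

section Closure

variable {W : Type} [LinearOrder W] (A B : Set W)

theorem dcl_eq_lowerClosure : dcl A = lowerClosure A := rfl

theorem ucl_eq_upperClosure : ucl A = upperClosure A := rfl

theorem isLowerSet_dcl : IsLowerSet (dcl A) := (lowerClosure A).lower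

theorem isUpperSet_ucl : IsUpperSet (ucl A) := (upperClosure A).upper

theorem subset_dcl : A ⊆ dcl A := subset_lowerClosure

theorem subset_ucl : A ⊆ ucl A := subset_upperClosure

@[simp]
theorem dcl_dcl : dcl (dcl A) = dcl A := (isLowerSet_dcl A).lowerClosure

@[simp]
theorem ucl_ucl : ucl (ucl A) = ucl A := (isUpperSet_ucl A).upperClosure

@[simp]
theorem dcl_empty : dcl (∅ : Set W) = ∅ := by simp [dcl]

@[simp]
theorem ucl_empty : ucl (∅ : Set W) = ∅ := by simp [ucl]

variable {A B}

theorem dcl_mono (h : A ⊆ B) : dcl A ⊆ dcl B := fun _ ⟨w, hw, hle⟩ => ⟨w, h hw, hle⟩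

theorem ucl_mono (h : A ⊆ B) : ucl A ⊆ ucl B := fun _ ⟨w, hw, hle⟩ => ⟨w, h hw, hle⟩

theorem ucl_inter_dcl_eq_empty_iff : ucl A ∩ dcl B = ∅ ↔ A ∩ dcl B = ∅ := by
  simp only [← Set.disjoint_iff_inter_eq_empty, ucl_eq_upperClosure,
    (isLowerSet_dcl B).disjoint_upperClosure_left]

theorem dcl_inter_ucl_eq_empty_iff : dcl A ∩ ucl B = ∅ ↔ A ∩ ucl B = ∅ := by
  simp only [← Set.disjoint_iff_inter_eq_empty, dcl_eq_lowerClosure,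
    (isUpperSet_ucl B).disjoint_lowerClosure_left]

theorem dcl_inter_ucl_of_subsingleton (hA : A.Subsingleton) : dcl A ∩ ucl A = A := by
  obtain rfl | ⟨w, rfl⟩ := hA.eq_empty_or_singleton
  · simp
  · rw [Set.inter_comm]
    exact Set.ordConnected_singleton.upperClosure_inter_lowerClosure

end Closure

namespace SimilaritySpace

variable {T : FiniteTNorm} {W : Type} [Fintype W] [Nonempty W] (sp : SimilaritySpace T W)
  {c d : T.V} {A : Set W}

theorem le_self (c : T.V) (w : W) : (c : ℝ) ≤ sp.S w w := by
  rw [(sp.eq_one_iff w w).2 rfl]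
  exact FiniteTNorm.le_one c

theorem subset_nbhd (c : T.V) (A : Set W) : A ⊆ sp.nbhd c A :=
  fun w hw => ⟨w, hw, sp.le_self c w⟩

theorem nbhd_anti (hdc : (d : ℝ) ≤ c) (A : Set W) : sp.nbhd c A ⊆ sp.nbhd d A :=
  fun _ ⟨a, ha, hc⟩ => ⟨a, ha, hdc.trans hc⟩

theorem nbhd_mono (c : T.V) {A B : Set W} (h : A ⊆ B) : sp.nbhd c A ⊆ sp.nbhd c B :=
  fun _ ⟨a, ha, hc⟩ => ⟨a, h ha, hc⟩

@[simp]
theorem nbhd_one (A : Set W) : sp.nbhd T.one A = A := by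
  refine Set.Subset.antisymm ?_ (sp.subset_nbhd _ _)
  rintro w ⟨a, ha, h⟩
  obtain rfl := (sp.eq_one_iff w a).1 (Subtype.ext (le_antisymm (FiniteTNorm.le_one _) h))
  exact ha

@[simp]
theorem nbhd_empty (c : T.V) : sp.nbhd c ∅ = ∅ := by simp [nbhd]

theorem nbhd_zero (hA : A.Nonempty) : sp.nbhd T.zero A = Set.univ :=
  Set.eq_univ_of_forall fun _ => ⟨hA.some, hA.some_mem, FiniteTNorm.zero_le _⟩

theorem nbhd_union (c : T.V) (A B : Set W) :
    sp.nbhd c (A ∪ B) = sp.nbhd c A ∪ sp.nbhd c B := by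
  ext w
  simp only [nbhd, Set.mem_union, Set.mem_ofPred_eq, or_and_right, exists_or]

theorem nbhd_nbhd_subset (c d : T.V) (A : Set W) :
    sp.nbhd c (sp.nbhd d A) ⊆ sp.nbhd (T.op c d) A := by
  rintro w ⟨v, ⟨a, ha, hd⟩, hc⟩
  exact ⟨a, ha, (T.op_mono _ _ _ _ hc hd).trans (sp.triangle w v a)⟩

theorem subset_nbhd_comm {B : Set W} (hB : B.Subsingleton) (hA : A.Nonempty)
    (h : A ⊆ sp.nbhd c B) : B ⊆ sp.nbhd c A := by
  intro w hw
  obtain ⟨v, hv⟩ := hA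
  obtain ⟨b, hb, hc⟩ := h hv
  obtain rfl := hB hw hb
  exact ⟨v, hv, sp.symm v w ▸ hc⟩

theorem mem_nbhd_singleton {v w : W} : v ∈ sp.nbhd c {w} ↔ (c : ℝ) ≤ sp.S v w := by
  simp [nbhd]

theorem mem_nbhd_iff_nonempty {w : W} : w ∈ sp.nbhd c A ↔ (A ∩ sp.nbhd c {w}).Nonempty := by
  simp [nbhd, Set.Nonempty, sp.symm w]

end SimilaritySpace

namespace TOSimilaritySpace

variable {T : FiniteTNorm} {W : Type} [Fintype W] [Nonempty W] [LinearOrder W]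
  (sp : TOSimilaritySpace T W)

theorem ordConnected_nbhd_singleton (c : T.V) (w : W) : (sp.nbhd c {w}).OrdConnected := by
  refine ⟨fun a ha b hb v ⟨hav, hvb⟩ => ?_⟩
  rw [sp.mem_nbhd_singleton] at *
  rcases le_total v w with hvw | hwv
  · exact ha.trans ((sp.compat a v w hav hvw).trans (min_le_right _ _))
  · rw [sp.symm] at hb ⊢
    exact hb.trans ((sp.compat w v b hwv hvb).trans (min_le_left _ _))

/-- Helly's theorem on the chain, applied to `A`, `B` and the `c`-ball of a point. -/
theorem nbhd_inter_nbhd_subset {A B : Set W} (hA : A.OrdConnected) (hB : B.OrdConnected)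
    (hAB : (A ∩ B).Nonempty) (c : T.V) : sp.nbhd c A ∩ sp.nbhd c B ⊆ sp.nbhd c (A ∩ B) := by
  rintro w ⟨hwA, hwB⟩
  rw [sp.mem_nbhd_iff_nonempty] at *
  exact nonempty_inter_inter_of_ordConnected hA hB (sp.ordConnected_nbhd_singleton c w)
    hAB hwB hwA

theorem dcl_nbhd_subset (c : T.V) (A : Set W) : dcl (sp.nbhd c A) ⊆ sp.nbhd c (dcl A) := by
  rintro v ⟨w, ⟨a, ha, hwa⟩, hvw⟩
  rcases le_total v a with hva | hav
  · exact sp.subset_nbhd c _ ⟨a, ha, hva⟩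
  · refine ⟨a, subset_dcl A ha, sp.mem_nbhd_singleton.1 ?_⟩
    exact (sp.ordConnected_nbhd_singleton c a).out (sp.subset_nbhd c _ rfl)
      (sp.mem_nbhd_singleton.2 hwa) ⟨hav, hvw⟩

theorem ucl_nbhd_subset (c : T.V) (A : Set W) : ucl (sp.nbhd c A) ⊆ sp.nbhd c (ucl A) := by
  rintro v ⟨w, ⟨a, ha, hwa⟩, hwv⟩
  rcases le_total a v with hav | hva
  · exact sp.subset_nbhd c _ ⟨a, ha, hav⟩
  · refine ⟨a, subset_ucl A ha, sp.mem_nbhd_singleton.1 ?_⟩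
    exact (sp.ordConnected_nbhd_singleton c a).out (sp.mem_nbhd_singleton.2 hwa)
      (sp.subset_nbhd c _ rfl) ⟨hwv, hva⟩

end TOSimilaritySpace

/-! ### Boolean structure of basic expressions -/

namespace BExpC

variable {N : ℕ}

/-- Truth of a basic expression under a classical valuation `a` that treats the diamond
expressions, like the variables, as atoms; the values of `a` elsewhere are irrelevant. -/
def Holds (a : BExpC N → Prop) : BExpC N → Prop
  | .var i => a (.var i)
  | .bot => False
  | .top => True
  | .and φ ψ => Holds a φ ∧ Holds a ψ
  | .or φ ψ => Holds a φ ∨ Holds a ψ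
  | .not φ => ¬ Holds a φ
  | .dle φ => a φ.dle
  | .dge φ => a φ.dge

theorem holds_conjListC (a : BExpC N → Prop) :
    ∀ l : List (BExpC N), (conjListC l).Holds a ↔ ∀ φ ∈ l, φ.Holds a
  | [] => by simp [conjListC, Holds]
  | [φ] => by simp [conjListC]
  | φ :: χ :: l => by
    rw [List.forall_mem_cons, ← holds_conjListC a (χ :: l)]
    rfl

theorem holds_literal (a : BExpC N → Prop) (i : Fin N) (b : Bool) :
    (literal i b).Holds a ↔ (a (.var i) ↔ b = true) := by
  cases b <;> simp [literal, Holds]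

theorem holds_conjListC_literal (a : BExpC N → Prop) {l : List (Fin N)} (hl : ∀ i, i ∈ l)
    (f : Fin N → Bool) :
    (conjListC (l.map fun i => literal i (f i))).Holds a ↔ ∀ i, (a (.var i) ↔ f i = true) := by
  simp [holds_conjListC, holds_literal, hl]

end BExpC

/-! ### Soundness -/

namespace LAECEval

variable {N : ℕ} {W : Type} [Fintype W] [Nonempty W] [LinearOrder W] (ev : LAECEval N W)

attribute [simp] map_bot map_top map_and map_or map_not map_dle map_dge

theorem mem_iff_holds (w : W) (φ : BExpC N) :
    w ∈ ev.e φ ↔ φ.Holds (fun χ => w ∈ ev.e χ) := by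
  induction φ with
  | and φ ψ ih₁ ih₂ => simp [BExpC.Holds, ← ih₁, ← ih₂]
  | or φ ψ ih₁ ih₂ => simp [BExpC.Holds, ← ih₁, ← ih₂]
  | not φ ih => simp [BExpC.Holds, ← ih]
  | _ => simp [BExpC.Holds]

theorem mem_substC_iff [∀ φ (w : W), Decidable (w ∈ ev.e φ)] (w : W) (σ : ℕ → BExpC N)
    (φ : PropForm) :
    w ∈ ev.e (φ.substC σ) ↔ φ.beval (fun n => decide (w ∈ ev.e (σ n))) = true := by
  induction φ <;> simp [PropForm.substC, PropForm.beval, *]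

theorem subsingleton_of_isMecC {ε : BExpC N} (hε : IsMecC ε) : (ev.e ε).Subsingleton := by
  obtain ⟨l, f, -, hl, rfl⟩ := hε
  intro u hu v hv
  rw [ev.mem_iff_holds, BExpC.holds_conjListC_literal _ hl] at hu hv
  by_contra huv
  obtain ⟨i, hi⟩ := ev.separating u v huv
  exact (xor_iff_not_iff _ _).1 hi ((hu i).trans (hv i).symm)

theorem ordConnected_of_isDiamond {χ : BExpC N} (hχ : IsDiamond χ) :
    (ev.e χ).OrdConnected := by
  cases χ with
  | dle φ => simpa using (isLowerSet_dcl (ev.e φ)).ordConnected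
  | dge φ => simpa using (isUpperSet_ucl (ev.e φ)).ordConnected
  | _ => exact hχ.elim

theorem ordConnected_of_isDiamondConj {ρ : BExpC N} (hρ : IsDiamondConj ρ) :
    (ev.e ρ).OrdConnected := by
  obtain ⟨l, -, hl, rfl⟩ := hρ
  have e_conj : ev.e (conjListC l) = ⋂ χ ∈ l, ev.e χ := by
    ext w
    rw [ev.mem_iff_holds, BExpC.holds_conjListC]
    simp only [← ev.mem_iff_holds, Set.mem_iInter]
  rw [e_conj]
  exact Set.ordConnected_biInter fun χ hχ => ev.ordConnected_of_isDiamond (hl χ hχ)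

end LAECEval

namespace LAECSat

variable {N : ℕ} {T : FiniteTNorm} {W : Type} [Fintype W] [Nonempty W] [LinearOrder W]
  (sp : TOSimilaritySpace T W) (ev : LAECEval N W)

@[simp]
theorem gi_iff {φ ψ : BExpC N} {c : T.V} :
    LAECSat sp ev (.gi φ c ψ) ↔ ev.e φ ⊆ sp.nbhd c (ev.e ψ) := Iff.rfl

@[simp]
theorem and_iff {Φ Ψ : CFml N T.V} :
    LAECSat sp ev (.and Φ Ψ) ↔ LAECSat sp ev Φ ∧ LAECSat sp ev Ψ := Iff.rfl

@[simp]
theorem or_iff {Φ Ψ : CFml N T.V} :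
    LAECSat sp ev (.or Φ Ψ) ↔ LAECSat sp ev Φ ∨ LAECSat sp ev Ψ := Iff.rfl

@[simp]
theorem not_iff {Φ : CFml N T.V} : LAECSat sp ev (.not Φ) ↔ ¬ LAECSat sp ev Φ := Iff.rfl

@[simp]
theorem imp_iff {Φ Ψ : CFml N T.V} :
    LAECSat sp ev (Φ.imp Ψ) ↔ (LAECSat sp ev Φ → LAECSat sp ev Ψ) :=
  imp_iff_not_or.symm

theorem iff_peval [∀ Φ, Decidable (LAECSat sp ev Φ)] (Φ : CFml N T.V) :
    LAECSat sp ev Φ ↔ Φ.peval (fun φ c ψ => decide (LAECSat sp ev (.gi φ c ψ))) = true := by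
  induction Φ <;> simp [CFml.peval, *]

end LAECSat

namespace LAECProv

variable {N : ℕ} {T : FiniteTNorm} {Th : Set (CFml N T.V)} {Φ : CFml N T.V}

theorem sat {W : Type} [Fintype W] [Nonempty W] [LinearOrder W]
    (sp : TOSimilaritySpace T W) (ev : LAECEval N W) (h : LAECProv T Th Φ)
    (hTh : ∀ Ψ ∈ Th, LAECSat sp ev Ψ) : LAECSat sp ev Φ := by
  classical
  induction h with try simp only [LAECSat.imp_iff, LAECSat.and_iff, LAECSat.or_iff,
    LAECSat.not_iff, LAECSat.gi_iff, SimilaritySpace.nbhd_one, LAECEval.map_bot,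
    LAECEval.map_top, LAECEval.map_and, LAECEval.map_or, LAECEval.map_not, LAECEval.map_dle,
    LAECEval.map_dge, SimilaritySpace.nbhd_empty, Set.subset_empty_iff, and_imp,
    ← Set.nonempty_iff_ne_empty, ← ne_eq]
  | hyp h => exact hTh _ h
  | mp _ _ h₁ h₂ => exact (LAECSat.imp_iff sp ev).1 h₂ h₁
  | a1' h =>
    obtain ⟨φ', ψ', σ, h, rfl, rfl⟩ := h
    intro w
    simpa only [ev.mem_substC_iff] using h _
  | a2 => exact fun h => Set.sdiff_eq_empty.2 h
  | a3 _ _ hdc => exact fun h => h.trans (sp.nbhd_anti hdc _)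
  | a4 => exact fun h => (Set.subset_univ _).trans (sp.nbhd_zero h).ge
  | a5 => exact id
  | a6 c _ hε => exact sp.subset_nbhd_comm (ev.subsingleton_of_isMecC hε)
  | a7 => exact Set.union_subset
  | a8 _ _ c hε =>
    rcases (ev.subsingleton_of_isMecC hε).eq_empty_or_singleton with h | ⟨w, h⟩
    · simp [h]
    · simp [h, sp.nbhd_union]
  | a9 =>
    exact fun h₁ h₂ => h₁.trans ((sp.nbhd_mono _ h₂).trans (sp.nbhd_nbhd_subset _ _ _))
  | a10 => exact Set.univ_nonempty
  | a11 h => exact (LAECSat.iff_peval sp ev _).2 (h _)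
  | a12a => exact subset_dcl _
  | a12b => exact subset_ucl _
  | a13a => exact (dcl_dcl _).subset
  | a13b => exact (ucl_ucl _).subset
  | a14a => exact dcl_empty
  | a14b => exact ucl_empty
  | a15a => exact (isLowerSet_dcl _).total (isLowerSet_dcl _)
  | a15b => exact (isUpperSet_ucl _).total (isUpperSet_ucl _)
  | a16 hε => exact (dcl_inter_ucl_of_subsingleton (ev.subsingleton_of_isMecC hε)).subset
  | a17a => exact fun h => (dcl_mono h).trans (sp.dcl_nbhd_subset _ _)
  | a17b => exact fun h => (ucl_mono h).trans (sp.ucl_nbhd_subset _ _)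
  | a18a => exact ucl_inter_dcl_eq_empty_iff.2
  | a18b => exact dcl_inter_ucl_eq_empty_iff.2
  | a19 _ c hρ hσ =>
    exact fun hne h₁ h₂ => (Set.subset_inter h₁ h₂).trans (sp.nbhd_inter_nbhd_subset
      (ev.ordConnected_of_isDiamondConj hρ) (ev.ordConnected_of_isDiamondConj hσ) hne c)

end LAECProv

/-! ### Basic expressions as classical formulas -/

namespace BExpC

variable {N : ℕ}

/-- A Gödel numbering of the basic expressions; it provides propositional variables naming the
atoms of `BExpC.skeleton`. -/
def code : BExpC N → ℕ
  | .var i => Nat.pair 0 i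
  | .bot => Nat.pair 1 0
  | .top => Nat.pair 2 0
  | .and φ ψ => Nat.pair 3 (Nat.pair (code φ) (code ψ))
  | .or φ ψ => Nat.pair 4 (Nat.pair (code φ) (code ψ))
  | .not φ => Nat.pair 5 (code φ)
  | .dle φ => Nat.pair 6 (code φ)
  | .dge φ => Nat.pair 7 (code φ)

theorem code_injective : Function.Injective (code (N := N)) := by
  intro φ ψ h
  induction φ generalizing ψ <;> cases ψ <;> grind [code, Nat.pair_eq_pair]

/-- The Boolean skeleton of a basic expression: the classical formula obtained by replacing
variables and outermost diamond expressions by propositional variables. -/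
def skeleton : BExpC N → PropForm
  | .var i => .var (code (.var i : BExpC N))
  | .bot => .bot
  | .top => .top
  | .and φ ψ => .and φ.skeleton ψ.skeleton
  | .or φ ψ => .or φ.skeleton ψ.skeleton
  | .not φ => .not φ.skeleton
  | .dle φ => .var (code φ.dle)
  | .dge φ => .var (code φ.dge)

theorem skeleton_substC {σ : ℕ → BExpC N} (hσ : Function.LeftInverse σ code) (φ : BExpC N) :
    φ.skeleton.substC σ = φ := by
  induction φ <;> simp [skeleton, PropForm.substC, hσ _, *]

theorem skeleton_beval (v : ℕ → Bool) (φ : BExpC N) :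
    φ.skeleton.beval v = true ↔ φ.Holds (fun χ => v χ.code = true) := by
  induction φ with
  | not φ ih => simp [skeleton, PropForm.beval, Holds, ← ih]
  | _ => simp [skeleton, PropForm.beval, Holds, *]

/-- The disjunction of a list of basic expressions. -/
def disjListC : List (BExpC N) → BExpC N := List.foldr .or .bot

theorem holds_disjListC (a : BExpC N → Prop) (l : List (BExpC N)) :
    (disjListC l).Holds a ↔ ∃ φ ∈ l, φ.Holds a := by
  induction l with
  | nil => simp [disjListC, Holds]
  | cons φ l ih =>
    rw [List.exists_mem_cons_iff, ← ih]
    rfl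

/-- The m.e.c. in which the sign of the variable `i` is `f i`. -/
def mec (f : Fin N → Bool) : BExpC N :=
  conjListC ((List.finRange N).map fun i => literal i (f i))

theorem isMecC_mec (f : Fin N → Bool) : IsMecC (mec f) :=
  ⟨List.finRange N, f, List.nodup_finRange N, List.mem_finRange, rfl⟩

theorem holds_mec (a : BExpC N → Prop) (f : Fin N → Bool) :
    (mec f).Holds a ↔ ∀ i, (a (.var i) ↔ f i = true) :=
  holds_conjListC_literal a List.mem_finRange f

/-- The list of all expressions `δ ∧ φ` with `δ` a m.e.c. -/
noncomputable def mecExpansion (φ : BExpC N) : List (BExpC N) :=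
  (Finset.univ : Finset (Fin N → Bool)).toList.map fun f => (mec f).and φ

theorem mem_mecExpansion {φ χ : BExpC N} :
    χ ∈ φ.mecExpansion ↔ ∃ f, (mec f).and φ = χ := by
  simp [mecExpansion]

theorem holds_disjListC_mecExpansion {a : BExpC N → Prop} {φ : BExpC N} (h : φ.Holds a) :
    (disjListC φ.mecExpansion).Holds a := by
  classical
  refine (holds_disjListC a _).2
    ⟨_, mem_mecExpansion.2 ⟨fun i => decide (a (.var i)), rfl⟩, (holds_mec a _).2 ?_, h⟩
  simp

theorem isDiamondConj_dle (φ : BExpC N) : IsDiamondConj φ.dle :=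
  ⟨[φ.dle], by simp, by simp [IsDiamond], rfl⟩

theorem isDiamondConj_dge (φ : BExpC N) : IsDiamondConj φ.dge :=
  ⟨[φ.dge], by simp, by simp [IsDiamond], rfl⟩

end BExpC

/-! ### Derived rules -/

namespace LAECProv

variable {N : ℕ} {T : FiniteTNorm} {Th : Set (CFml N T.V)} {A B Φ : CFml N T.V}
  {φ ψ χ : BExpC N} {c : T.V}

theorem tautology_mp (hA : LAECProv T Th A)
    (h : ∀ g, A.peval g = true → Φ.peval g = true) : LAECProv T Th Φ :=
  hA.mp <| .a11 fun g => by
    have := h g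
    simp only [CFml.imp, CFml.peval]
    grind

theorem and_intro (hA : LAECProv T Th A) (hB : LAECProv T Th B) : LAECProv T Th (A.and B) :=
  hB.mp <| hA.tautology_mp fun g hg => by simp [CFml.imp, CFml.peval, hg]

theorem and_iff : LAECProv T Th (A.and B) ↔ LAECProv T Th A ∧ LAECProv T Th B := by
  refine ⟨fun h => ⟨h.tautology_mp fun g => ?_, h.tautology_mp fun g => ?_⟩,
    fun h => h.1.and_intro h.2⟩ <;>
  simp +contextual [CFml.peval]

theorem gi_of_tautology (h : ∀ a, φ.Holds a → ψ.Holds a) : LAECProv T Th (.gi φ T.one ψ) := by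
  have : Nonempty (BExpC N) := ⟨.bot⟩
  have decode : Function.LeftInverse (Function.invFun BExpC.code) (BExpC.code (N := N)) :=
    Function.leftInverse_invFun BExpC.code_injective
  refine .a1' ⟨φ.skeleton, ψ.skeleton, Function.invFun BExpC.code, fun v => ?_,
    (BExpC.skeleton_substC decode φ).symm, (BExpC.skeleton_substC decode ψ).symm⟩
  simpa only [BExpC.skeleton_beval] using h _

theorem gi_refl (φ : BExpC N) : LAECProv T Th (.gi φ T.one φ) := gi_of_tautology fun _ => id

theorem gi_trans {d : T.V} (h₁ : LAECProv T Th (.gi φ c ψ)) (h₂ : LAECProv T Th (.gi ψ d χ)) :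
    LAECProv T Th (.gi φ (T.op c d) χ) :=
  (h₁.and_intro h₂).mp (.a9 ..)

theorem gi_trans_one (h₁ : LAECProv T Th (.gi φ c ψ)) (h₂ : LAECProv T Th (.gi ψ T.one χ)) :
    LAECProv T Th (.gi φ c χ) := by
  simpa only [show T.op c T.one = c from T.op_one c] using h₁.gi_trans h₂

theorem one_gi_trans (h₁ : LAECProv T Th (.gi φ T.one ψ)) (h₂ : LAECProv T Th (.gi ψ c χ)) :
    LAECProv T Th (.gi φ c χ) := by
  simpa only [FiniteTNorm.one_op] using h₁.gi_trans h₂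

theorem gi_of_one (h : LAECProv T Th (.gi φ T.one ψ)) : LAECProv T Th (.gi φ c ψ) :=
  h.mp (.a3 _ _ (FiniteTNorm.le_one c))

theorem gi_of_gi_bot (h : LAECProv T Th (.gi φ T.one .bot)) : LAECProv T Th (.gi φ c ψ) :=
  (h.gi_trans_one (gi_of_tautology fun _ => False.elim)).gi_of_one

theorem or_gi (h₁ : LAECProv T Th (.gi φ c χ)) (h₂ : LAECProv T Th (.gi ψ c χ)) :
    LAECProv T Th (.gi (φ.or ψ) c χ) :=
  (h₁.and_intro h₂).mp (.a7 ..)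

theorem disjListC_gi {l : List (BExpC N)} (h : ∀ φ ∈ l, LAECProv T Th (.gi φ c χ)) :
    LAECProv T Th (.gi (BExpC.disjListC l) c χ) := by
  induction l with
  | nil => exact (gi_refl _).gi_of_gi_bot
  | cons φ l ih =>
    rw [List.forall_mem_cons] at h
    exact h.1.or_gi (ih h.2)

theorem gi_and (h₁ : LAECProv T Th (.gi φ T.one ψ)) (h₂ : LAECProv T Th (.gi φ T.one χ)) :
    LAECProv T Th (.gi φ T.one (ψ.and χ)) := by
  have not_ψ : LAECProv T Th (.gi (φ.and ψ.not) T.one (ψ.and χ)) :=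
    (h₁.mp (.a2 ..)).gi_of_gi_bot
  have not_χ : LAECProv T Th (.gi (φ.and χ.not) T.one (ψ.and χ)) :=
    (h₂.mp (.a2 ..)).gi_of_gi_bot
  refine one_gi_trans (gi_of_tautology fun a => ?_) ((not_ψ.or_gi not_χ).or_gi (gi_refl _))
  simp only [BExpC.Holds]
  tauto

theorem gi_and_iff :
    LAECProv T Th (.gi φ T.one (ψ.and χ)) ↔
      LAECProv T Th (.gi φ T.one ψ) ∧ LAECProv T Th (.gi φ T.one χ) :=
  ⟨fun h => ⟨h.gi_trans_one (gi_of_tautology fun _ => And.left),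
    h.gi_trans_one (gi_of_tautology fun _ => And.right)⟩, fun h => h.1.gi_and h.2⟩

/-! ### Complete theories -/

theorem theory_induction {P : CFml N T.V → Prop} (hyp : ∀ Φ ∈ Th, P Φ)
    (ax : ∀ Φ, (∀ Th', LAECProv T Th' Φ) → P Φ) (mp : ∀ Φ Ψ, P Φ → P (Φ.imp Ψ) → P Ψ)
    (h : LAECProv T Th Φ) : P Φ := by
  induction h with
  | hyp h => exact hyp _ h
  | mp _ _ h₁ h₂ => exact mp _ _ h₁ h₂
  | a1' h => exact ax _ fun _ => .a1' h
  | a2 => exact ax _ fun _ => .a2 ..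
  | a3 _ _ h => exact ax _ fun _ => .a3 _ _ h
  | a4 => exact ax _ fun _ => .a4 ..
  | a5 => exact ax _ fun _ => .a5 ..
  | a6 _ hδ hε => exact ax _ fun _ => .a6 _ hδ hε
  | a7 => exact ax _ fun _ => .a7 ..
  | a8 _ _ _ hε => exact ax _ fun _ => .a8 _ _ _ hε
  | a9 => exact ax _ fun _ => .a9 ..
  | a10 => exact ax _ fun _ => .a10
  | a11 h => exact ax _ fun _ => .a11 h
  | a12a => exact ax _ fun _ => .a12a _
  | a12b => exact ax _ fun _ => .a12b _
  | a13a => exact ax _ fun _ => .a13a _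
  | a13b => exact ax _ fun _ => .a13b _
  | a14a => exact ax _ fun _ => .a14a
  | a14b => exact ax _ fun _ => .a14b
  | a15a => exact ax _ fun _ => .a15a ..
  | a15b => exact ax _ fun _ => .a15b ..
  | a16 hε => exact ax _ fun _ => .a16 hε
  | a17a => exact ax _ fun _ => .a17a ..
  | a17b => exact ax _ fun _ => .a17b ..
  | a18a => exact ax _ fun _ => .a18a ..
  | a18b => exact ax _ fun _ => .a18b ..
  | a19 _ _ hρ hσ => exact ax _ fun _ => .a19 _ _ hρ hσ

theorem mono {Th' : Set (CFml N T.V)} (hTh : Th ⊆ Th') (h : LAECProv T Th Φ) :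
    LAECProv T Th' Φ :=
  h.theory_induction (fun _ hΦ => .hyp (hTh hΦ)) (fun _ h => h Th') fun _ _ => .mp

theorem deduction (h : LAECProv T (insert A Th) Φ) : LAECProv T Th (A.imp Φ) := by
  refine h.theory_induction (P := fun Ψ => LAECProv T Th (A.imp Ψ)) ?_
    (fun Ψ h => (h Th).tautology_mp ?_)
    fun Ψ Ψ' h₁ h₂ => (h₁.and_intro h₂).tautology_mp fun g => ?_
  · rintro Ψ (rfl | hΨ)
    · exact .a11 fun g => by simp [CFml.imp, CFml.peval]
    · exact (hyp hΨ).tautology_mp fun g hg => by simp [CFml.imp, CFml.peval, hg]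
  · exact fun g hg => by simp [CFml.imp, CFml.peval, hg]
  · simp only [CFml.imp, CFml.peval]
    grind

theorem exists_finite_subset (h : LAECProv T Th Φ) :
    ∃ s ⊆ Th, s.Finite ∧ LAECProv T s Φ := by
  refine h.theory_induction (P := fun Φ => ∃ s ⊆ Th, s.Finite ∧ LAECProv T s Φ)
    (fun Ψ hΨ => ⟨{Ψ}, Set.singleton_subset_iff.2 hΨ, Set.finite_singleton Ψ, .hyp rfl⟩)
    (fun Ψ h => ⟨∅, Set.empty_subset Th, Set.finite_empty, h ∅⟩) ?_
  rintro Ψ Ψ' ⟨s, hs, hs_fin, h₁⟩ ⟨t, ht, ht_fin, h₂⟩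
  exact ⟨s ∪ t, Set.union_subset hs ht, hs_fin.union ht_fin,
    (h₁.mono Set.subset_union_left).mp (h₂.mono Set.subset_union_right)⟩

end LAECProv

/-- A theory is complete if it proves the negation of a formula exactly when it does not prove
the formula itself; in particular it is consistent. -/
class IsCompleteTheory {N : ℕ} {T : FiniteTNorm} (M : Set (CFml N T.V)) : Prop where
  prov_not_iff (A : CFml N T.V) : LAECProv T M A.not ↔ ¬ LAECProv T M A

namespace LAECProv

variable {N : ℕ} {T : FiniteTNorm} {Th M : Set (CFml N T.V)} {A B Φ : CFml N T.V}

theorem not_iff [IsCompleteTheory M] : LAECProv T M A.not ↔ ¬ LAECProv T M A :=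
  IsCompleteTheory.prov_not_iff A

theorem or_iff [IsCompleteTheory M] :
    LAECProv T M (A.or B) ↔ LAECProv T M A ∨ LAECProv T M B := by
  constructor
  · refine fun h => or_iff_not_imp_left.2 fun hA => (h.and_intro (not_iff.2 hA)).tautology_mp ?_
    intro g
    simp only [CFml.peval]
    grind
  · rintro (h | h) <;> exact h.tautology_mp fun g hg => by simp [CFml.peval, hg]

theorem exists_maximal_not_prov (h : ¬ LAECProv T Th Φ) :
    ∃ M, Th ⊆ M ∧ Maximal (fun M => ¬ LAECProv T M Φ) M := by
  refine zorn_subset_nonempty {M | ¬ LAECProv T M Φ} (fun C hC hchain hne => ?_) Th h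
  refine ⟨⋃₀ C, fun hC_prov => ?_, fun _ => Set.subset_sUnion_of_mem⟩
  obtain ⟨s, hs, hs_fin, hs_prov⟩ := exists_finite_subset hC_prov
  obtain ⟨M, hM, hsM⟩ :=
    hchain.directedOn.exists_mem_subset_of_finite_of_subset_sUnion hne hs_fin hs
  exact hC hM (hs_prov.mono hsM)

theorem isCompleteTheory_of_maximal (hM : Maximal (fun M => ¬ LAECProv T M Φ) M) :
    IsCompleteTheory M := by
  have prov_imp : ∀ {B}, ¬ LAECProv T M B → LAECProv T M (B.imp Φ) := by
    intro B hB
    by_contra hn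
    exact hB (.hyp (hM.le_of_ge (fun h => hn h.deduction) (Set.subset_insert B M)
      (Set.mem_insert B M)))
  refine ⟨fun A => ⟨fun hnA hA => hM.prop ?_, fun hA => ?_⟩⟩
  · exact (hA.and_intro hnA).tautology_mp fun g => by simp [CFml.peval]
  · by_contra hnA
    refine hM.prop (((prov_imp hA).and_intro (prov_imp hnA)).tautology_mp fun g => ?_)
    simp only [CFml.imp, CFml.peval]
    grind

end LAECProv

/-! ### The canonical model of a complete theory -/

/-- The worlds of the canonical model of the theory `M`: the sign vectors whose m.e.c. is
consistent with `M`. -/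
def CanonicalWorld {N : ℕ} {T : FiniteTNorm} (M : Set (CFml N T.V)) : Type :=
  {f : Fin N → Bool // ¬ LAECProv T M (.gi (BExpC.mec f) T.one .bot)}

namespace CanonicalWorld

variable {N : ℕ} {T : FiniteTNorm} {M : Set (CFml N T.V)}

/-- The m.e.c. describing a world of the canonical model. -/
def mec (w : CanonicalWorld M) : BExpC N := BExpC.mec w.1

theorem isMecC_mec (w : CanonicalWorld M) : IsMecC w.mec := BExpC.isMecC_mec w.1

noncomputable instance : Fintype (CanonicalWorld M) :=
  have : Finite (CanonicalWorld M) := Subtype.finite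
  Fintype.ofFinite _

theorem not_gi_bot (w : CanonicalWorld M) (c : T.V) : ¬ LAECProv T M (.gi w.mec c .bot) :=
  fun h => w.2 (h.mp (.a5 ..))

variable {u v w : CanonicalWorld M} {φ ψ : BExpC N} {c : T.V}

theorem gi_literal_iff {i : Fin N} {b : Bool} :
    LAECProv T M (.gi w.mec T.one (.literal i b)) ↔ w.1 i = b := by
  have self_literal : LAECProv T M (.gi w.mec T.one (.literal i (w.1 i))) :=
    .gi_of_tautology fun a ha => (BExpC.holds_literal a i _).2 ((BExpC.holds_mec a w.1).1 ha i)
  refine ⟨fun h => ?_, fun h => h ▸ self_literal⟩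
  by_contra hne
  refine w.2 ((self_literal.gi_and h).gi_trans_one (.gi_of_tautology fun a ⟨h₁, h₂⟩ => hne ?_))
  rw [BExpC.holds_literal] at h₁ h₂
  exact Bool.eq_iff_iff.2 (h₁.symm.trans h₂)

theorem gi_var_iff {i : Fin N} : LAECProv T M (.gi w.mec T.one (.var i)) ↔ w.1 i = true :=
  gi_literal_iff (b := true)

theorem eq_of_gi_mec (h : LAECProv T M (.gi u.mec T.one v.mec)) : u = v :=
  Subtype.ext <| funext fun _ => gi_literal_iff.1 (h.gi_trans_one (gi_literal_iff.2 rfl))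

variable [IsCompleteTheory M]

theorem gi_or_iff :
    LAECProv T M (.gi w.mec c (φ.or ψ)) ↔
      LAECProv T M (.gi w.mec c φ) ∨ LAECProv T M (.gi w.mec c ψ) := by
  constructor
  · exact fun h => LAECProv.or_iff.1 (h.mp (.a8 _ _ _ w.isMecC_mec))
  · rintro (h | h)
    · exact h.gi_trans_one (.gi_of_tautology fun _ => Or.inl)
    · exact h.gi_trans_one (.gi_of_tautology fun _ => Or.inr)

theorem gi_not_iff :
    LAECProv T M (.gi w.mec T.one φ.not) ↔ ¬ LAECProv T M (.gi w.mec T.one φ) := by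
  have excluded_middle : LAECProv T M (.gi w.mec T.one (φ.or φ.not)) :=
    .gi_of_tautology fun _ _ => em _
  exact ⟨fun hn h => w.2 ((h.gi_and hn).gi_trans_one (.gi_of_tautology fun _ h => h.2 h.1)),
    (gi_or_iff.1 excluded_middle).resolve_left⟩

theorem exists_mem_gi_of_gi_disjListC {l : List (BExpC N)}
    (h : LAECProv T M (.gi w.mec c (BExpC.disjListC l))) :
    ∃ φ ∈ l, LAECProv T M (.gi w.mec c φ) := by
  induction l with
  | nil => exact absurd h (w.not_gi_bot c)
  | cons φ l ih =>
    rw [List.exists_mem_cons_iff]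
    exact (gi_or_iff.1 h).imp_right ih

theorem gi_bot_or_exists_gi (f : Fin N → Bool) (φ : BExpC N) :
    LAECProv T M (.gi ((BExpC.mec f).and φ) T.one .bot) ∨
      ∃ w : CanonicalWorld M, w.1 = f ∧ LAECProv T M (.gi w.mec T.one φ) := by
  by_cases hf : LAECProv T M (.gi (BExpC.mec f) T.one .bot)
  · exact .inl ((LAECProv.gi_of_tautology fun _ => And.left).gi_trans_one hf)
  by_cases hφ : LAECProv T M (.gi (BExpC.mec f) T.one φ)
  · exact .inr ⟨⟨f, hf⟩, rfl, hφ⟩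
  · have hnφ : LAECProv T M (.gi (BExpC.mec f) T.one φ.not) :=
      gi_not_iff (w := ⟨f, hf⟩).2 hφ
    refine .inl (.one_gi_trans (.gi_of_tautology fun a h => ?_) (hnφ.mp (.a2 ..)))
    exact ⟨h.1, not_not_intro h.2⟩

theorem gi_of_forall_world
    (h : ∀ w : CanonicalWorld M, LAECProv T M (.gi w.mec T.one φ) →
      LAECProv T M (.gi w.mec c ψ)) :
    LAECProv T M (.gi φ c ψ) := by
  refine .one_gi_trans (.gi_of_tautology fun _ => BExpC.holds_disjListC_mecExpansion)
    (.disjListC_gi fun χ hχ => ?_)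
  obtain ⟨f, rfl⟩ := BExpC.mem_mecExpansion.1 hχ
  obtain hbot | ⟨w, rfl, hw⟩ := gi_bot_or_exists_gi (M := M) f φ
  · exact hbot.gi_of_gi_bot
  · exact .one_gi_trans (.gi_of_tautology fun _ => And.left) (h w hw)

theorem exists_world_gi (h : LAECProv T M (.gi w.mec c ψ)) :
    ∃ u : CanonicalWorld M, LAECProv T M (.gi u.mec T.one ψ) ∧
      LAECProv T M (.gi w.mec c u.mec) := by
  obtain ⟨χ, hχ, hw⟩ := exists_mem_gi_of_gi_disjListC
    (h.gi_trans_one (.gi_of_tautology fun _ => BExpC.holds_disjListC_mecExpansion))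
  obtain ⟨f, rfl⟩ := BExpC.mem_mecExpansion.1 hχ
  obtain hbot | ⟨u, rfl, hu⟩ := gi_bot_or_exists_gi (M := M) f ψ
  · exact absurd (hw.gi_trans_one hbot) (w.not_gi_bot c)
  · exact ⟨u, hu, hw.gi_trans_one (.gi_of_tautology fun _ => And.left)⟩

theorem gi_mec_comm (h : LAECProv T M (.gi u.mec c v.mec)) : LAECProv T M (.gi v.mec c u.mec) :=
  ((LAECProv.not_iff.2 u.2).and_intro h).mp (.a6 _ u.isMecC_mec v.isMecC_mec)

instance : Nonempty (CanonicalWorld M) := by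
  by_contra hempty
  exact LAECProv.not_iff.1 .a10 (gi_of_forall_world fun w => absurd ⟨w⟩ hempty)

/-! ### The canonical order -/

theorem exists_gi_of_gi_dle (h : LAECProv T M (.gi w.mec T.one φ.dle)) :
    ∃ u : CanonicalWorld M, LAECProv T M (.gi u.mec T.one φ) ∧
      LAECProv T M (.gi u.mec T.one w.mec.dge) := by
  by_contra hn
  -- By (A18b) disjointness from `◇≥w` passes from `φ` to `◇≤φ`, yet `w` lies in both.
  have disjoint : LAECProv T M (.gi (φ.and w.mec.dge) T.one .bot) :=
    gi_of_forall_world fun u hu => absurd ⟨u, LAECProv.gi_and_iff.1 hu⟩ hn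
  exact w.2 ((h.gi_and (.a12b _)).gi_trans_one (disjoint.mp (.a18b ..)))

theorem exists_gi_of_gi_dge (h : LAECProv T M (.gi w.mec T.one φ.dge)) :
    ∃ u : CanonicalWorld M, LAECProv T M (.gi u.mec T.one φ) ∧
      LAECProv T M (.gi u.mec T.one w.mec.dle) := by
  by_contra hn
  have disjoint : LAECProv T M (.gi (φ.and w.mec.dle) T.one .bot) :=
    gi_of_forall_world fun u hu => absurd ⟨u, LAECProv.gi_and_iff.1 hu⟩ hn
  exact w.2 ((h.gi_and (.a12a _)).gi_trans_one (disjoint.mp (.a18a ..)))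

theorem gi_dle_mec_iff :
    LAECProv T M (.gi u.mec T.one v.mec.dle) ↔ LAECProv T M (.gi v.mec T.one u.mec.dge) := by
  constructor <;> intro h
  · obtain ⟨x, hxv, hxu⟩ := exists_gi_of_gi_dle h
    exact eq_of_gi_mec hxv ▸ hxu
  · obtain ⟨x, hxu, hxv⟩ := exists_gi_of_gi_dge h
    exact eq_of_gi_mec hxu ▸ hxv

theorem gi_mec_of_gi_dle_of_gi_dge (h₁ : LAECProv T M (.gi φ c v.mec.dle))
    (h₂ : LAECProv T M (.gi φ c v.mec.dge)) : LAECProv T M (.gi φ c v.mec) := by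
  have consistent : ¬ LAECProv T M (.gi (v.mec.dle.and v.mec.dge) T.one .bot) := fun h =>
    v.2 ((LAECProv.gi_and (.a12a _) (.a12b _)).gi_trans_one h)
  have meet : LAECProv T M (.gi φ c (v.mec.dle.and v.mec.dge)) :=
    (((LAECProv.not_iff.2 consistent).and_intro h₁).and_intro h₂).mp
      (.a19 _ _ (BExpC.isDiamondConj_dle _) (BExpC.isDiamondConj_dge _))
  exact meet.gi_trans_one (.a16 v.isMecC_mec)

noncomputable instance : LinearOrder (CanonicalWorld M) where
  le u v := LAECProv T M (.gi u.mec T.one v.mec.dle)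
  le_refl u := .a12a _
  le_trans u v w huv hvw := huv.gi_trans_one ((hvw.mp (.a17a ..)).gi_trans_one (.a13a _))
  le_antisymm u v huv hvu :=
    eq_of_gi_mec (gi_mec_of_gi_dle_of_gi_dge huv (gi_dle_mec_iff.1 hvu))
  le_total u v := (LAECProv.or_iff.1 (.a15a u.mec v.mec)).imp
    (LAECProv.gi_trans_one (.a12a _)) (LAECProv.gi_trans_one (.a12a _))
  toDecidableLE := Classical.decRel _

theorem le_iff_gi_dle : u ≤ v ↔ LAECProv T M (.gi u.mec T.one v.mec.dle) := Iff.rfl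

theorem le_iff_gi_dge : u ≤ v ↔ LAECProv T M (.gi v.mec T.one u.mec.dge) := gi_dle_mec_iff

/-! ### The canonical similarity -/

theorem exists_isGreatest_gi_mec (u v : CanonicalWorld M) :
    ∃ c, IsGreatest {c | LAECProv T M (.gi u.mec c v.mec)} c := by
  have : Finite T.V := T.finite.to_subtype
  obtain ⟨c, hc, hmax⟩ := Set.exists_max_image {c | LAECProv T M (.gi u.mec c v.mec)} id
    (Set.toFinite _) ⟨T.zero, (LAECProv.not_iff.2 v.2).mp (.a4 ..)⟩
  exact ⟨c, hc, hmax⟩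

/-- The similarity of two worlds of the canonical model: the greatest grade `c` for which
`u ⤳_c v` is provable. -/
noncomputable def similarity (u v : CanonicalWorld M) : T.V :=
  (exists_isGreatest_gi_mec u v).choose

theorem le_similarity_iff :
    (c : ℝ) ≤ similarity u v ↔ LAECProv T M (.gi u.mec c v.mec) :=
  have greatest := (exists_isGreatest_gi_mec u v).choose_spec
  ⟨fun h => greatest.1.mp (.a3 _ _ h), fun h => greatest.2 h⟩

theorem gi_similarity (u v : CanonicalWorld M) :
    LAECProv T M (.gi u.mec (similarity u v) v.mec) :=
  le_similarity_iff.1 le_rfl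

theorem similarity_eq_one_iff : similarity u v = T.one ↔ u = v := by
  refine ⟨fun h => eq_of_gi_mec (h ▸ gi_similarity u v), ?_⟩
  rintro rfl
  exact Subtype.ext (le_antisymm (FiniteTNorm.le_one _) (le_similarity_iff.2 (.gi_refl _)))

theorem similarity_comm (u v : CanonicalWorld M) : similarity u v = similarity v u :=
  Subtype.ext <| le_antisymm (le_similarity_iff.2 (gi_mec_comm (gi_similarity u v)))
    (le_similarity_iff.2 (gi_mec_comm (gi_similarity v u)))

theorem similarity_le_left (huv : u ≤ v) (hvw : v ≤ w) :
    (similarity u w : ℝ) ≤ similarity u v :=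
  le_similarity_iff.2 <| gi_mec_of_gi_dle_of_gi_dge (le_iff_gi_dle.1 huv).gi_of_one
    ((gi_similarity u w).gi_trans_one (le_iff_gi_dge.1 hvw))

theorem similarity_le_right (huv : u ≤ v) (hvw : v ≤ w) :
    (similarity u w : ℝ) ≤ similarity v w := by
  rw [similarity_comm u w, similarity_comm v w]
  exact le_similarity_iff.2 <| gi_mec_of_gi_dle_of_gi_dge
    ((gi_similarity w u).gi_trans_one (le_iff_gi_dle.1 huv)) (le_iff_gi_dge.1 hvw).gi_of_one

end CanonicalWorld

section CanonicalModel

variable {N : ℕ} {T : FiniteTNorm} (M : Set (CFml N T.V)) [IsCompleteTheory M]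

open CanonicalWorld

/-- The canonical totally ordered similarity space of a complete theory. -/
noncomputable def canonicalSpace : TOSimilaritySpace T (CanonicalWorld M) where
  S := similarity
  eq_one_iff _ _ := similarity_eq_one_iff
  symm := similarity_comm
  triangle u v w := le_similarity_iff.2 ((gi_similarity u v).gi_trans (gi_similarity v w))
  compat _ _ _ huv hvw := le_min (similarity_le_left huv hvw) (similarity_le_right huv hvw)

/-- The canonical evaluation of a complete theory: `φ` is true at the worlds whose m.e.c.
provably implies it. -/
def canonicalEval : LAECEval N (CanonicalWorld M) where
  e φ := {w | LAECProv T M (.gi w.mec T.one φ)}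
  map_bot := Set.eq_empty_of_forall_notMem fun w => w.2
  map_top := Set.eq_univ_of_forall fun _ => .gi_of_tautology fun _ _ => trivial
  map_and _ _ := Set.ext fun _ => LAECProv.gi_and_iff
  map_or _ _ := Set.ext fun _ => gi_or_iff
  map_not _ := Set.ext fun _ => gi_not_iff
  map_dle φ := by
    ext w
    constructor
    · intro h
      obtain ⟨u, hu, hwu⟩ := exists_gi_of_gi_dle h
      exact ⟨u, hu, le_iff_gi_dge.2 hwu⟩
    · rintro ⟨u, hu, hwu⟩
      exact (le_iff_gi_dle.1 hwu).gi_trans_one (hu.mp (.a17a ..))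
  map_dge φ := by
    ext w
    constructor
    · intro h
      obtain ⟨u, hu, huw⟩ := exists_gi_of_gi_dge h
      exact ⟨u, hu, le_iff_gi_dle.2 huw⟩
    · rintro ⟨u, hu, huw⟩
      exact (le_iff_gi_dge.1 huw).gi_trans_one (hu.mp (.a17b ..))
  separating v w hvw := by
    obtain ⟨i, hi⟩ := Function.ne_iff.1 (Subtype.coe_ne_coe.2 hvw)
    refine ⟨i, (xor_iff_not_iff _ _).2 fun h => hi ?_⟩
    exact Bool.eq_iff_iff.2 (gi_var_iff.symm.trans (h.trans gi_var_iff))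

variable {M}

theorem canonicalEval_subset_nbhd_iff {φ ψ : BExpC N} {c : T.V} :
    (canonicalEval M).e φ ⊆ (canonicalSpace M).nbhd c ((canonicalEval M).e ψ) ↔
      LAECProv T M (.gi φ c ψ) := by
  constructor
  · refine fun h => gi_of_forall_world fun w hw => ?_
    obtain ⟨u, hu, hc⟩ := h hw
    exact (le_similarity_iff.1 hc).gi_trans_one hu
  · intro h w hw
    obtain ⟨u, hu, hwu⟩ := exists_world_gi (hw.one_gi_trans h)
    exact ⟨u, hu, le_similarity_iff.2 hwu⟩

theorem sat_canonical_iff (Φ : CFml N T.V) :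
    LAECSat (canonicalSpace M) (canonicalEval M) Φ ↔ LAECProv T M Φ := by
  induction Φ with
  | gi φ c ψ => exact canonicalEval_subset_nbhd_iff
  | and Φ Ψ ih₁ ih₂ => rw [LAECSat.and_iff, LAECProv.and_iff, ih₁, ih₂]
  | or Φ Ψ ih₁ ih₂ => rw [LAECSat.or_iff, LAECProv.or_iff, ih₁, ih₂]
  | not Φ ih => rw [LAECSat.not_iff, LAECProv.not_iff, ih]

end CanonicalModel

theorem LAECProv.of_entails {N : ℕ} {T : FiniteTNorm} {Th : Set (CFml N T.V)} {Φ : CFml N T.V}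
    (h : LAECEntails T Th Φ) : LAECProv T Th Φ := by
  by_contra hΦ
  obtain ⟨M, hTh, hM⟩ := exists_maximal_not_prov hΦ
  have := isCompleteTheory_of_maximal hM
  have sat_Th : ∀ Ψ ∈ Th, LAECSat (canonicalSpace M) (canonicalEval M) Ψ := fun Ψ hΨ =>
    (sat_canonical_iff Ψ).2 (.hyp (hTh hΨ))
  exact hM.prop ((sat_canonical_iff Φ).1 (h (CanonicalWorld M) _ _ sat_Th))

/-- Soundness and completeness of the Logic of Approximate Entailment on a
Chain: `T ⊢_LAEC Φ` iff `T ⊨_LAEC Φ`. -/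
theorem LAEC_soundness_and_completeness {N : ℕ} (hN : 0 < N) (T : FiniteTNorm)
    (Th : Set (CFml N T.V)) (Φ : CFml N T.V) :
    LAECProv T Th Φ ↔ LAECEntails T Th Φ := by
  exact ⟨fun h W _ _ _ sp ev hTh => h.sat sp ev hTh, LAECProv.of_entails⟩
end

section
/- Neighbourhoods commute with intersections of orthotopes: let (W, S, (≤_i)_{i=1,…,M}) be a component-wise ordered similarity space, let A and B be orthotopes in W with non-empty intersection, and let c ∈ V. Then U_c(A ∩ B) = U_c(A) ∩ U_c(B). -/
/-- The similarity on the product `W = ∏ i, W i` of totally ordered similarity spaces: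
`S(v,w) = min_i S_i(v_i, w_i)`. -/
noncomputable def prodS {T : FiniteTNorm} {M : ℕ} {W : Fin M → Type}
    [∀ i, Fintype (W i)] [∀ i, Nonempty (W i)] [∀ i, LinearOrder (W i)]
    (hM : 0 < M) (sps : ∀ i, TOSimilaritySpace T (W i))
    (v w : ∀ i, W i) : T.V :=
  haveI : Nonempty (Fin M) := ⟨⟨0, hM⟩⟩
  Finset.univ.inf' Finset.univ_nonempty fun i => (sps i).S (v i) (w i)

/-- The `c`-neighbourhood in a component-wise ordered similarity space. -/
def pNbhd {T : FiniteTNorm} {M : ℕ} {W : Fin M → Type}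
    [∀ i, Fintype (W i)] [∀ i, Nonempty (W i)] [∀ i, LinearOrder (W i)]
    (hM : 0 < M) (sps : ∀ i, TOSimilaritySpace T (W i))
    (c : T.V) (A : Set (∀ i, W i)) : Set (∀ i, W i) :=
  {w | ∃ a ∈ A, (c : ℝ) ≤ (prodS hM sps w a : ℝ)}

/-- `◇≤A` in a component-wise ordered similarity space. -/
def pDcl {M : ℕ} {W : Fin M → Type} [∀ i, LinearOrder (W i)]
    (A : Set (∀ i, W i)) : Set (∀ i, W i) :=
  {w | ∀ i, ∃ v ∈ A, w i ≤ v i}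

/-- `◇≥A` in a component-wise ordered similarity space. -/
def pUcl {M : ℕ} {W : Fin M → Type} [∀ i, LinearOrder (W i)]
    (A : Set (∀ i, W i)) : Set (∀ i, W i) :=
  {w | ∀ i, ∃ v ∈ A, v i ≤ w i}

/-- The cylindrical extension `πC` of a subset `C` of the `i`-th component. -/
def cyl {M : ℕ} {W : Fin M → Type} (i : Fin M) (C : Set (W i)) : Set (∀ j, W j) :=
  {w | w i ∈ C}

/-- The cylindrical extension `πA` of a subset `A` of the partial product over the
block of coordinates `I`. -/
def cylOn {M : ℕ} {W : Fin M → Type} (I : Finset (Fin M))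
    (A : Set (∀ i : {x // x ∈ I}, W i.1)) : Set (∀ i, W i) :=
  {w | (fun i : {x // x ∈ I} => w i.1) ∈ A}

/-- An orthotope in the product `∏ i, W i`: a Cartesian product of intervals `[uᵢ, vᵢ]`. -/
def IsOrthotope {M : ℕ} {W : Fin M → Type} [∀ i, LinearOrder (W i)]
    (A : Set (∀ i, W i)) : Prop :=
  ∃ u v : ∀ i, W i, (∀ i, u i ≤ v i) ∧ A = {w | ∀ i, u i ≤ w i ∧ w i ≤ v i}

/-!
Every coordinate of a similarity ball around `w` is order-convex: a point between two points of the
ball lies between `w` and one of them. Hence orthotopes and balls alike are products of order-convex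
sets. In a chain, three order-convex sets that meet pairwise have a common point, because one of the
three witnesses lies between the other two; coordinatewise, this Helly property passes to products.
Applied to `A`, `B` and the `c`-ball around `w`, it says that a ball meeting both `A` and `B` meets
`A ∩ B`.
-/

open Set

theorem mem_uIcc_or_mem_uIcc_or_mem_uIcc {α : Type*} [LinearOrder α] (a b c : α) :
    a ∈ uIcc b c ∨ b ∈ uIcc a c ∨ c ∈ uIcc a b := by
  simp only [mem_uIcc]
  grind

theorem nonempty_inter_inter_of_ordConnected_s17 {α : Type*} [LinearOrder α] {s t u : Set α}
    (hs : s.OrdConnected) (ht : t.OrdConnected) (hu : u.OrdConnected)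
    (hst : (s ∩ t).Nonempty) (hsu : (s ∩ u).Nonempty) (htu : (t ∩ u).Nonempty) :
    (s ∩ t ∩ u).Nonempty := by
  obtain ⟨a, has, hat⟩ := hst
  obtain ⟨b, hbs, hbu⟩ := hsu
  obtain ⟨c, hct, hcu⟩ := htu
  rcases mem_uIcc_or_mem_uIcc_or_mem_uIcc a b c with ha | hb | hc
  · exact ⟨a, ⟨has, hat⟩, hu.uIcc_subset hbu hcu ha⟩
  · exact ⟨b, ⟨hbs, ht.uIcc_subset hat hct hb⟩, hbu⟩
  · exact ⟨c, ⟨hs.uIcc_subset has hbs hc, hct⟩, hcu⟩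

theorem ordConnected_setOf_le_of_mem_uIcc {α β : Type*} [LinearOrder α] [Preorder β] {f : α → β}
    {w : α} (hf : ∀ x y, x ∈ uIcc w y → f y ≤ f x) (c : β) : {x | c ≤ f x}.OrdConnected := by
  refine ⟨fun a (ha : c ≤ f a) b (hb : c ≤ f b) x ⟨hax, hxb⟩ ↦ ?_⟩
  rcases le_total w x with hwx | hxw
  · exact hb.trans (hf x b (mem_uIcc_of_le hwx hxb))
  · exact ha.trans (hf x a (mem_uIcc_of_ge hax hxw))

section Box

variable {ι : Type*} {α : ι → Type*} [∀ i, LinearOrder (α i)] {A B C : Set (∀ i, α i)}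

/-- A box in a product of chains: a product of order-convex sets. The factors need not have end
points and may be empty, so that orthotopes and similarity balls are both boxes. -/
def IsBox (A : Set (∀ i, α i)) : Prop :=
  ∃ s : ∀ i, Set (α i), (∀ i, (s i).OrdConnected) ∧ A = univ.pi s

theorem IsBox.nonempty_inter_inter (hA : IsBox A) (hB : IsBox B) (hC : IsBox C)
    (hAB : (A ∩ B).Nonempty) (hAC : (A ∩ C).Nonempty) (hBC : (B ∩ C).Nonempty) :
    (A ∩ B ∩ C).Nonempty := by
  obtain ⟨s, hs, rfl⟩ := hA
  obtain ⟨t, ht, rfl⟩ := hB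
  obtain ⟨u, hu, rfl⟩ := hC
  simp only [← pi_inter_distrib, univ_pi_nonempty_iff] at hAB hAC hBC ⊢
  exact fun i ↦
    nonempty_inter_inter_of_ordConnected_s17 (hs i) (ht i) (hu i) (hAB i) (hAC i) (hBC i)

end Box

section Neighbourhood

variable {ι β : Type*} {α : ι → Type*} [Preorder β] {S : ∀ i, α i → α i → β}

/-- The `c`-ball around `w` for the component-wise similarity. The condition `min_i S_i ≥ c` is
expressed coordinatewise, so that no minimum has to exist in `β`. -/
def similarityBall (S : ∀ i, α i → α i → β) (c : β) (w : ∀ i, α i) : Set (∀ i, α i) :=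
  {a | ∀ i, c ≤ S i (w i) (a i)}

/-- The neighbourhood `U_c(A)` for the component-wise similarity: the points whose `c`-ball
meets `A`. -/
def similarityNbhd (S : ∀ i, α i → α i → β) (c : β) (A : Set (∀ i, α i)) : Set (∀ i, α i) :=
  {w | (A ∩ similarityBall S c w).Nonempty}

theorem similarityNbhd_mono {A B : Set (∀ i, α i)} (h : A ⊆ B) (c : β) :
    similarityNbhd S c A ⊆ similarityNbhd S c B :=
  fun _ hw ↦ hw.mono (inter_subset_inter_left _ h)

variable [∀ i, LinearOrder (α i)]

theorem isBox_similarityBall (hS : ∀ i w x y, x ∈ uIcc w y → S i w y ≤ S i w x) (c : β)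
    (w : ∀ i, α i) : IsBox (similarityBall S c w) :=
  ⟨fun i ↦ {x | c ≤ S i (w i) x}, fun i ↦ ordConnected_setOf_le_of_mem_uIcc (hS i (w i)) c,
    Set.ext fun _ ↦ mem_univ_pi.symm⟩

theorem pNbhd_inter_orthotopes_general {A B : Set (∀ i, α i)}
    (hS : ∀ i w x y, x ∈ uIcc w y → S i w y ≤ S i w x) (hA : IsBox A) (hB : IsBox B)
    (hAB : (A ∩ B).Nonempty) (c : β) :
    similarityNbhd S c (A ∩ B) = similarityNbhd S c A ∩ similarityNbhd S c B := by
  apply Subset.antisymm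
  · exact subset_inter (similarityNbhd_mono inter_subset_left c)
      (similarityNbhd_mono inter_subset_right c)
  · rintro w ⟨hwA, hwB⟩
    exact hA.nonempty_inter_inter hB (isBox_similarityBall hS c w) hAB hwA hwB

end Neighbourhood

theorem TOSimilaritySpace.S_le_S_of_mem_uIcc {T : FiniteTNorm} {W : Type} [Fintype W] [Nonempty W]
    [LinearOrder W] (sp : TOSimilaritySpace T W) (w x y : W) (hx : x ∈ uIcc w y) :
    sp.S w y ≤ sp.S w x := by
  rcases mem_uIcc.mp hx with ⟨hwx, hxy⟩ | ⟨hyx, hxw⟩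
  · exact (sp.compat w x y hwx hxy).trans (min_le_left _ _)
  · rw [sp.symm w y, sp.symm w x]
    exact (sp.compat y x w hyx hxw).trans (min_le_right _ _)

theorem IsOrthotope.isBox {M : ℕ} {W : Fin M → Type} [∀ i, LinearOrder (W i)]
    {A : Set (∀ i, W i)} (hA : IsOrthotope A) : IsBox A := by
  obtain ⟨u, v, -, rfl⟩ := hA
  exact ⟨fun i ↦ Icc (u i) (v i), fun _ ↦ ordConnected_Icc,
    Set.ext fun _ ↦ mem_univ_pi.symm⟩

section Product

variable {T : FiniteTNorm} {M : ℕ} {W : Fin M → Type} [∀ i, Fintype (W i)]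
  [∀ i, Nonempty (W i)] [∀ i, LinearOrder (W i)]

theorem le_prodS_iff (hM : 0 < M) (sps : ∀ i, TOSimilaritySpace T (W i)) (c : T.V)
    (v w : ∀ i, W i) : c ≤ prodS hM sps v w ↔ ∀ i, c ≤ (sps i).S (v i) (w i) := by
  simp only [prodS, Finset.le_inf'_iff, Finset.mem_univ, true_implies]

theorem pNbhd_eq_similarityNbhd (hM : 0 < M) (sps : ∀ i, TOSimilaritySpace T (W i)) (c : T.V)
    (A : Set (∀ i, W i)) : pNbhd hM sps c A = similarityNbhd (fun i ↦ (sps i).S) c A := by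
  ext w
  exact exists_congr fun a ↦ and_congr_right fun _ ↦ le_prodS_iff hM sps c w a

end Product

/-- Neighbourhoods commute with intersections of orthotopes: for orthotopes
`A`, `B` with non-empty intersection, `U_c(A ∩ B) = U_c(A) ∩ U_c(B)`. -/
theorem pNbhd_inter_orthotopes {T : FiniteTNorm} {M : ℕ} {W : Fin M → Type}
    [∀ i, Fintype (W i)] [∀ i, Nonempty (W i)] [∀ i, LinearOrder (W i)]
    (hM : 0 < M) (sps : ∀ i, TOSimilaritySpace T (W i))
    (A B : Set (∀ i, W i)) (hA : IsOrthotope A) (hB : IsOrthotope B)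
    (hAB : (A ∩ B).Nonempty) (c : T.V) :
    pNbhd hM sps c (A ∩ B) = pNbhd hM sps c A ∩ pNbhd hM sps c B := by
  simp only [pNbhd_eq_similarityNbhd]
  exact pNbhd_inter_orthotopes_general (fun i ↦ (sps i).S_le_S_of_mem_uIcc) hA.isBox hB.isBox hAB c
end
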